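/- For every coupling λ ≥ 0 and every p ∈ {1,…,N}, the logarithm of the LSZ partition function satisfies −∂/∂E_p [log Z(0,0)] = (1/N)·Σ_{n=1}^N ∂²(log Z)/∂J_{pn}∂K_{np}(0,0). Equivalently, the correlator Ω_p := (1/N²)·Σ_{n=1}^N ∂²(log Z)/∂J_{pn}∂K_{np}(0,0) is created from the free energy by the boundary creation operator: Ω_p = −(1/N)·∂ log Z(0,0)/∂E_p. -/

import Mathlib

/-!
With all sources in the exponent, `Z` is the exponential generating function of the Boltzmann
measure `μ = exp (-N S(Φ)) dΦ`, so second derivatives of `log Z` are covariances under normalized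
`μ`: `∂²(log Z)/∂J_{pn}∂K_{np}` is `N²` times the mean of `|Φ_{pn}|²`, since the mean of `Φ_{pn}`
vanishes by `Φ ↦ -Φ`. Shifting `E_p` by `t` tilts `μ` by `exp (-t N Σ_n |Φ_{pn}|²)`, so
`∂(log Z)/∂E_p` is `-N` times the mean of `Σ_n |Φ_{pn}|²`.

All differentiations under the integral are justified by exponential moments of `Σ |Φ_{nm}|²` under
`μ`, which follow by Gaussian comparison from a bound `c Σ |Φ_{nm}|² ≤ S(Φ) + C`. For `λ > 0` this
bound comes from the quartic term of `S`, which is at least `(λ/2) Σ |Φ_{nm}|⁴`, and for `λ = 0`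
from the quadratic one.
-/

open MeasureTheory Matrix

/-- The LSZ action `S(Φ) = Σ_{m,n} (E_n + Ẽ_m)|Φ_{nm}|² + (λ/2)·Tr((Φ*Φ)²)`,
viewed as a complex number. -/
noncomputable def lszAction (N : ℕ) (E Et : Fin N → ℝ) (lam : ℝ)
    (Φ : Fin N → Fin N → ℂ) : ℂ :=
  (∑ n, ∑ m, (((E n + Et m : ℝ)) : ℂ) * ((Complex.normSq (Φ n m) : ℝ) : ℂ))
    + ((lam / 2 : ℝ) : ℂ) *
      ((((Matrix.of Φ)ᴴ * Matrix.of Φ) * ((Matrix.of Φ)ᴴ * Matrix.of Φ)).trace)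

/-- The integrand of the LSZ partition function with sources `J`, `K`. -/
noncomputable def lszIntegrand (N : ℕ) (E Et : Fin N → ℝ) (lam : ℝ)
    (J K : Fin N → Fin N → ℂ) (Φ : Fin N → Fin N → ℂ) : ℂ :=
  Complex.exp (-(N : ℂ) * lszAction N E Et lam Φ
    + (N : ℂ) * ((∑ m, ∑ n, J n m * (starRingEnd ℂ) (Φ n m))
      + ∑ m, ∑ n, K m n * Φ n m))

/-- The LSZ partition function `Z(J,K)`. -/
noncomputable def lszZ (N : ℕ) (E Et : Fin N → ℝ) (lam : ℝ)
    (J K : Fin N → Fin N → ℂ) : ℂ :=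
  ∫ Φ : Fin N → Fin N → ℂ, lszIntegrand N E Et lam J K Φ

/-- The elementary matrix with a single `1` at position `(a,b)`. -/
def eMat (N : ℕ) (a b : Fin N) : Fin N → Fin N → ℂ :=
  fun i j => if i = a ∧ j = b then 1 else 0

/-- The holomorphic partial derivative `∂/∂J_{ab}` of a function of `(J,K)`. -/
noncomputable def dJ (N : ℕ) (a b : Fin N)
    (f : (Fin N → Fin N → ℂ) → (Fin N → Fin N → ℂ) → ℂ) :
    (Fin N → Fin N → ℂ) → (Fin N → Fin N → ℂ) → ℂ :=
  fun J K => deriv (fun t : ℂ => f (J + t • eMat N a b) K) 0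

/-- The holomorphic partial derivative `∂/∂K_{ab}` of a function of `(J,K)`. -/
noncomputable def dK (N : ℕ) (a b : Fin N)
    (f : (Fin N → Fin N → ℂ) → (Fin N → Fin N → ℂ) → ℂ) :
    (Fin N → Fin N → ℂ) → (Fin N → Fin N → ℂ) → ℂ :=
  fun J K => deriv (fun t : ℂ => f J (K + t • eMat N a b)) 0

lemma integral_eq_zero_of_odd {G E : Type*} [MeasurableSpace G] [AddGroup G] [MeasurableNeg G]
    [NormedAddCommGroup E] [NormedSpace ℝ E] (ν : Measure G) [ν.IsNegInvariant] {f : G → E}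
    (hf : Function.Odd f) : ∫ x, f x ∂ν = 0 := by
  have : IsAddTorsionFree E := .of_isTorsionFree ℝ E
  have h := integral_neg_eq_self f ν
  simp only [hf _, integral_neg] at h
  exact self_eq_neg.mp h.symm

section ExponentialTilts

variable {Ω : Type*} [MeasurableSpace Ω] {μ : Measure Ω}

lemma le_inv_mul_exp_mul {δ : ℝ} (hδ : 0 < δ) (x : ℝ) : x ≤ δ⁻¹ * Real.exp (δ * x) := by
  rw [← div_eq_inv_mul, le_div_iff₀ hδ, mul_comm]
  linarith [Real.add_one_le_exp (δ * x)]

lemma norm_cexp_mul_le {z : ℂ} {r : ℝ} (hz : ‖z‖ ≤ r) (w : ℂ) :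
    ‖Complex.exp (z * w)‖ ≤ Real.exp (r * ‖w‖) := by
  calc ‖Complex.exp (z * w)‖ ≤ Real.exp (‖z‖ * ‖w‖) := by
        simpa only [norm_mul] using Complex.norm_exp_le_exp_norm (z * w)
    _ ≤ Real.exp (r * ‖w‖) := by gcongr

lemma norm_mul_cexp_mul_le {z : ℂ} {r ε : ℝ} (hz : ‖z‖ ≤ r) (hr : r < ε) (w : ℂ) :
    ‖w * Complex.exp (z * w)‖ ≤ (ε - r)⁻¹ * Real.exp (ε * ‖w‖) := by
  calc ‖w * Complex.exp (z * w)‖ = ‖w‖ * ‖Complex.exp (z * w)‖ := norm_mul _ _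
    _ ≤ (ε - r)⁻¹ * Real.exp ((ε - r) * ‖w‖) * Real.exp (r * ‖w‖) := by
        gcongr
        · exact le_inv_mul_exp_mul (sub_pos.mpr hr) _
        · exact norm_cexp_mul_le hz w
    _ = (ε - r)⁻¹ * Real.exp (ε * ‖w‖) := by
        rw [mul_assoc, ← Real.exp_add, ← add_mul, sub_add_cancel]

lemma hasDerivAt_integral_mul_cexp {f h : Ω → ℂ} (hf : AEStronglyMeasurable f μ)
    (hh : AEStronglyMeasurable h μ) {ε : ℝ}
    (hint : Integrable (fun ω => ‖f ω‖ * Real.exp (ε * ‖h ω‖)) μ) {z : ℂ} (hz : ‖z‖ < ε) :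
    HasDerivAt (fun z : ℂ => ∫ ω, f ω * Complex.exp (z * h ω) ∂μ)
      (∫ ω, f ω * (h ω * Complex.exp (z * h ω)) ∂μ) z := by
  obtain ⟨r, hzr, hrε⟩ := exists_between hz
  have hexp (y : ℂ) : AEStronglyMeasurable (fun ω => Complex.exp (y * h ω)) μ :=
    Complex.continuous_exp.comp_aestronglyMeasurable (hh.const_mul y)
  have hball : Metric.ball 0 r ∈ nhds z := Metric.isOpen_ball.mem_nhds (by simpa using hzr)
  refine (hasDerivAt_integral_of_dominated_loc_of_deriv_le
    (F := fun y ω => f ω * Complex.exp (y * h ω))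
    (F' := fun y ω => f ω * (h ω * Complex.exp (y * h ω)))
    (bound := fun ω => (ε - r)⁻¹ * (‖f ω‖ * Real.exp (ε * ‖h ω‖)))
    hball (.of_forall fun y => hf.mul (hexp y)) ?integrable (hf.mul (hh.mul (hexp z)))
    (.of_forall fun ω y hy => ?bound) (hint.const_mul _) (.of_forall fun ω y _ => ?deriv)).2
  case integrable =>
    refine hint.mono' (hf.mul (hexp z)) (.of_forall fun ω => ?_)
    rw [norm_mul]
    gcongr
    exact norm_cexp_mul_le hz.le _
  case bound =>
    rw [norm_mul, mul_left_comm]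
    gcongr
    exact norm_mul_cexp_mul_le (mem_ball_zero_iff.mp hy).le hrε _
  case deriv =>
    have hlin : HasDerivAt (fun y : ℂ => y * h ω) (h ω) y := hasDerivAt_mul_const (h ω)
    simpa only [mul_comm] using hlin.cexp.const_mul (f ω)

lemma hasDerivAt_log_integral_mul_cexp {f h : Ω → ℂ} (hf : AEStronglyMeasurable f μ)
    (hh : AEStronglyMeasurable h μ) {ε : ℝ} (hε : 0 < ε)
    (hint : Integrable (fun ω => ‖f ω‖ * Real.exp (ε * ‖h ω‖)) μ)
    (hslit : ∫ ω, f ω ∂μ ∈ Complex.slitPlane) :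
    HasDerivAt (fun z : ℂ => Complex.log (∫ ω, f ω * Complex.exp (z * h ω) ∂μ))
      ((∫ ω, f ω * h ω ∂μ) / ∫ ω, f ω ∂μ) 0 := by
  have hderiv := hasDerivAt_integral_mul_cexp hf hh hint (z := 0) (by simpa using hε)
  simpa using hderiv.clog (by simpa using hslit)

lemma integral_one_mem_slitPlane [IsFiniteMeasure μ] [NeZero μ] :
    ∫ _, (1 : ℂ) ∂μ ∈ Complex.slitPlane := by
  simp [Complex.ofReal_mem_slitPlane]

lemma hasDerivAt_log_integral_cexp [IsFiniteMeasure μ] [NeZero μ] {X : Ω → ℂ}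
    (hX : AEStronglyMeasurable X μ) {ε : ℝ} (hε : 0 < ε)
    (hint : Integrable (fun ω => Real.exp (ε * ‖X ω‖)) μ) :
    HasDerivAt (fun z : ℂ => Complex.log (∫ ω, Complex.exp (z * X ω) ∂μ)) (⨍ ω, X ω ∂μ) 0 := by
  have h := hasDerivAt_log_integral_mul_cexp (f := fun _ => 1) aestronglyMeasurable_const hX hε
    (by simpa using hint) integral_one_mem_slitPlane
  simpa [average_eq, div_eq_inv_mul] using h

variable {X Y : Ω → ℂ} {ε : ℝ}

lemma integrable_exp_mul_norm_left (hX : AEStronglyMeasurable X μ) (hε : 0 ≤ ε)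
    (hint : Integrable (fun ω => Real.exp (ε * (‖X ω‖ + ‖Y ω‖))) μ) :
    Integrable (fun ω => Real.exp (ε * ‖X ω‖)) μ := by
  refine hint.mono' (by fun_prop) (.of_forall fun ω => ?_)
  rw [Real.norm_of_nonneg (by positivity)]
  gcongr
  exact le_add_of_nonneg_right (norm_nonneg _)

lemma eventually_deriv_log_integral_cexp_add [IsFiniteMeasure μ] [NeZero μ]
    (hX : AEStronglyMeasurable X μ) (hY : AEStronglyMeasurable Y μ) (hε : 0 < ε)
    (hint : Integrable (fun ω => Real.exp (ε * (‖X ω‖ + ‖Y ω‖))) μ) :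
    ∀ᶠ t in nhds (0 : ℂ),
      deriv (fun s : ℂ => Complex.log (∫ ω, Complex.exp (t * X ω + s * Y ω) ∂μ)) 0 =
        (∫ ω, Y ω * Complex.exp (t * X ω) ∂μ) / ∫ ω, Complex.exp (t * X ω) ∂μ := by
  have hcont : ContinuousAt (fun t : ℂ => ∫ ω, Complex.exp (t * X ω) ∂μ) 0 := by
    simpa using (hasDerivAt_integral_mul_cexp (f := fun _ => 1) aestronglyMeasurable_const hX
      (by simpa using integrable_exp_mul_norm_left hX hε.le hint) (by simpa using hε)).continuousAt
  have hslit : ∀ᶠ t in nhds (0 : ℂ), ∫ ω, Complex.exp (t * X ω) ∂μ ∈ Complex.slitPlane :=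
    hcont.eventually_mem (Complex.isOpen_slitPlane.mem_nhds
      (by simp [Complex.ofReal_mem_slitPlane]))
  filter_upwards [hslit, Metric.closedBall_mem_nhds 0 hε] with t ht htε
  have hexp : AEStronglyMeasurable (fun ω => Complex.exp (t * X ω)) μ :=
    Complex.continuous_exp.comp_aestronglyMeasurable (hX.const_mul t)
  have hdom : Integrable (fun ω => ‖Complex.exp (t * X ω)‖ * Real.exp (ε * ‖Y ω‖)) μ := by
    refine hint.mono' (hexp.norm.mul (by fun_prop)) (.of_forall fun ω => ?_)
    rw [Real.norm_of_nonneg (by positivity), mul_add, Real.exp_add]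
    gcongr
    exact norm_cexp_mul_le (mem_closedBall_zero_iff.mp htε) _
  simpa only [Complex.exp_add, mul_comm] using
    (hasDerivAt_log_integral_mul_cexp hexp hY hε hdom ht).deriv

theorem deriv_deriv_log_integral_cexp_add [IsFiniteMeasure μ] [NeZero μ]
    (hX : AEStronglyMeasurable X μ) (hY : AEStronglyMeasurable Y μ) (hε : 0 < ε)
    (hint : Integrable (fun ω => Real.exp (ε * (‖X ω‖ + ‖Y ω‖))) μ) :
    deriv (fun t : ℂ =>
        deriv (fun s : ℂ => Complex.log (∫ ω, Complex.exp (t * X ω + s * Y ω) ∂μ)) 0) 0 =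
      ⨍ ω, X ω * Y ω ∂μ - (⨍ ω, X ω ∂μ) * ⨍ ω, Y ω ∂μ := by
  have hzero : ‖(0 : ℂ)‖ < ε := by simpa using hε
  have hdomY : Integrable (fun ω => ‖Y ω‖ * Real.exp (ε * ‖X ω‖)) μ := by
    refine (hint.const_mul ε⁻¹).mono' (by fun_prop) (.of_forall fun ω => ?_)
    rw [Real.norm_of_nonneg (by positivity), add_comm, mul_add, Real.exp_add, ← mul_assoc]
    gcongr
    exact le_inv_mul_exp_mul hε _
  have hnum := hasDerivAt_integral_mul_cexp hY hX hdomY hzero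
  have hden := hasDerivAt_integral_mul_cexp (f := fun _ => 1) aestronglyMeasurable_const hX
    (by simpa using integrable_exp_mul_norm_left hX hε.le hint) hzero
  simp only [one_mul] at hden
  have hmass : (μ.real Set.univ : ℂ) ≠ 0 := by exact_mod_cast measureReal_univ_pos.ne'
  rw [Filter.EventuallyEq.deriv_eq (eventually_deriv_log_integral_cexp_add hX hY hε hint),
    (hnum.fun_div hden (by simpa using hmass)).deriv]
  simp only [average_eq, Complex.real_smul, Complex.ofReal_inv, integral_const, zero_mul,
    Complex.exp_zero, one_mul, mul_one, mul_comm (X _)]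
  field_simp

end ExponentialTilts

lemma mul_le_quadratic_add {l : ℝ} (hl : 0 < l) (a c x : ℝ) :
    c * x ≤ a * x + l / 2 * x ^ 2 + (c - a) ^ 2 / (2 * l) := by
  have hsq : 0 ≤ (l * x - (c - a)) ^ 2 / (2 * l) := by positivity
  have hexpand : (l * x - (c - a)) ^ 2 / (2 * l) =
      a * x + l / 2 * x ^ 2 + (c - a) ^ 2 / (2 * l) - c * x := by
    field_simp
    ring
  linarith

lemma integrable_exp_mul_of_integrable_exp_mul_sq {Ω : Type*} [MeasurableSpace Ω] {μ : Measure Ω}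
    {X : Ω → ℝ} (hX : AEStronglyMeasurable X μ) {ε : ℝ} (hε : 0 < ε)
    (hint : Integrable (fun ω => Real.exp (ε * X ω ^ 2)) μ) (c : ℝ) :
    Integrable (fun ω => Real.exp (c * X ω)) μ := by
  refine (hint.const_mul (Real.exp (c ^ 2 / (2 * (2 * ε))))).mono' (by fun_prop)
    (.of_forall fun ω => ?_)
  have hquad := mul_le_quadratic_add (l := 2 * ε) (by positivity) 0 c (X ω)
  rw [Real.norm_of_nonneg (by positivity), ← Real.exp_add, Real.exp_le_exp]
  rw [zero_mul, zero_add, sub_zero, mul_div_cancel_left₀ _ two_ne_zero] at hquad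
  linarith

lemma integrable_exp_neg_mul_sq_norm {V : Type*} [NormedAddCommGroup V] [InnerProductSpace ℝ V]
    [FiniteDimensional ℝ V] [MeasurableSpace V] [BorelSpace V] {b : ℝ} (hb : 0 < b) :
    Integrable fun v : V => Real.exp (-b * ‖v‖ ^ 2) := by
  have h := GaussianFourier.integrable_cexp_neg_mul_sq_norm_add (V := V) (b := b)
    (by simpa using hb) 0 0
  simpa [Complex.norm_exp, ← Complex.ofReal_pow, ← Complex.ofReal_mul, ← Complex.ofReal_neg]
    using h.norm

lemma integrable_exp_neg_mul_sum_sq_norm {ι κ : Type*} [Fintype ι] [Fintype κ] {b : ℝ}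
    (hb : 0 < b) :
    Integrable fun A : ι → κ → ℂ => Real.exp (-b * ∑ i, ∑ j, ‖A i j‖ ^ 2) := by
  have hrow : Integrable fun v : κ → ℂ => ∏ j, Real.exp (-b * ‖v j‖ ^ 2) :=
    .fintype_prod fun _ => integrable_exp_neg_mul_sq_norm hb
  have hprod : Integrable fun A : ι → κ → ℂ => ∏ i, ∏ j, Real.exp (-b * ‖A i j‖ ^ 2) :=
    .fintype_prod fun _ => hrow
  simpa only [← Real.exp_sum, ← Finset.mul_sum] using hprod

section Trace

variable {ι κ 𝕜 : Type*} [Fintype ι] [RCLike 𝕜]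

lemma conjTranspose_mul_self_apply_self (A : Matrix ι κ 𝕜) (j : κ) :
    (Aᴴ * A) j j = ∑ i, (‖A i j‖ : 𝕜) ^ 2 := by
  simp [Matrix.mul_apply, RCLike.conj_mul]

variable [Fintype κ]

lemma trace_conjTranspose_mul_self (A : Matrix ι κ 𝕜) :
    (Aᴴ * A).trace = ∑ j, ∑ i, (‖A i j‖ : 𝕜) ^ 2 := by
  simp only [Matrix.trace, Matrix.diag_apply, conjTranspose_mul_self_apply_self]

lemma trace_sq_conjTranspose_mul_self (A : Matrix ι κ 𝕜) :
    ((Aᴴ * A) * (Aᴴ * A)).trace = ∑ j, ∑ i, (‖(Aᴴ * A) i j‖ : 𝕜) ^ 2 := by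
  rw [← trace_conjTranspose_mul_self, (isHermitian_conjTranspose_mul_self A).eq]

lemma sum_norm_pow_four_le_sum_sq_norm_conjTranspose_mul_self (A : Matrix ι κ 𝕜) :
    ∑ i, ∑ j, (‖A i j‖ ^ 2) ^ 2 ≤ ∑ j, ∑ i, ‖(Aᴴ * A) i j‖ ^ 2 := by
  rw [Finset.sum_comm]
  gcongr with j
  have hdiag : ‖(Aᴴ * A) j j‖ = ∑ i, ‖A i j‖ ^ 2 := by
    have hcast : ∑ i, (‖A i j‖ : 𝕜) ^ 2 = ((∑ i, ‖A i j‖ ^ 2 : ℝ) : 𝕜) := by push_cast; rfl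
    rw [conjTranspose_mul_self_apply_self, hcast, RCLike.norm_of_nonneg (by positivity)]
  calc ∑ i, (‖A i j‖ ^ 2) ^ 2 ≤ (∑ i, ‖A i j‖ ^ 2) ^ 2 :=
        Finset.sum_sq_le_sq_sum_of_nonneg fun i _ => by positivity
    _ = ‖(Aᴴ * A) j j‖ ^ 2 := by rw [hdiag]
    _ ≤ ∑ i, ‖(Aᴴ * A) i j‖ ^ 2 :=
        Finset.single_le_sum (f := fun i => ‖(Aᴴ * A) i j‖ ^ 2) (fun i _ => by positivity)
          (Finset.mem_univ j)

end Trace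

section BoltzmannMeasure

variable {N : ℕ} (E Et : Fin N → ℝ) (lam : ℝ)

lemma lszAction_eq_ofReal (Φ : Fin N → Fin N → ℂ) :
    lszAction N E Et lam Φ = ((∑ n, ∑ m, (E n + Et m) * ‖Φ n m‖ ^ 2 +
      lam / 2 * ∑ j, ∑ i, ‖((Matrix.of Φ)ᴴ * Matrix.of Φ) i j‖ ^ 2 : ℝ) : ℂ) := by
  rw [lszAction, trace_sq_conjTranspose_mul_self]
  simp [Complex.normSq_eq_norm_sq]

lemma lszAction_ofReal_re (Φ : Fin N → Fin N → ℂ) :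
    ((lszAction N E Et lam Φ).re : ℂ) = lszAction N E Et lam Φ := by
  rw [lszAction_eq_ofReal, Complex.ofReal_re]

lemma continuous_lszAction : Continuous (lszAction N E Et lam) := by
  have : Continuous fun Φ : Fin N → Fin N → ℂ => Matrix.of Φ := continuous_id
  unfold lszAction
  fun_prop

lemma lszAction_even : Function.Even (lszAction N E Et lam) := by
  intro Φ
  have : Matrix.of (-Φ) = -Matrix.of Φ := rfl
  simp only [lszAction_eq_ofReal, this, Pi.neg_apply, norm_neg, Matrix.conjTranspose_neg,
    Matrix.neg_mul, Matrix.mul_neg, neg_neg]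

lemma lszAction_add (δ : Fin N → ℝ) (Φ : Fin N → Fin N → ℂ) :
    lszAction N (E + δ) Et lam Φ =
      lszAction N E Et lam Φ + ∑ n, (δ n : ℂ) * ∑ m, (‖Φ n m‖ : ℂ) ^ 2 := by
  simp only [lszAction_eq_ofReal, Pi.add_apply, add_mul, Finset.sum_add_distrib, Finset.mul_sum]
  push_cast
  ring

lemma lszAction_update (p : Fin N) (s : ℝ) (Φ : Fin N → Fin N → ℂ) :
    lszAction N (Function.update E p s) Et lam Φ =
      lszAction N E Et lam Φ + ((s - E p : ℝ) : ℂ) * ∑ m, (‖Φ p m‖ : ℂ) ^ 2 := by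
  have hupdate : Function.update E p s = E + Pi.single p (s - E p) := by
    ext n
    rcases eq_or_ne n p with rfl | hn <;> simp [*]
  rw [hupdate, lszAction_add, Finset.sum_eq_single p] <;> simp +contextual

lemma sum_le_lszAction_re {lam : ℝ} (hlam : 0 ≤ lam) (Φ : Fin N → Fin N → ℂ) :
    ∑ n, ∑ m, ((E n + Et m) * ‖Φ n m‖ ^ 2 + lam / 2 * (‖Φ n m‖ ^ 2) ^ 2) ≤
      (lszAction N E Et lam Φ).re := by
  have hquartic := mul_le_mul_of_nonneg_left
    (sum_norm_pow_four_le_sum_sq_norm_conjTranspose_mul_self (Matrix.of Φ))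
    (by positivity : 0 ≤ lam / 2)
  simp only [Matrix.of_apply] at hquartic
  simpa only [lszAction_eq_ofReal, Complex.ofReal_re, Finset.sum_add_distrib, ← Finset.mul_sum,
    add_le_add_iff_left] using hquartic

variable {E Et lam}

lemma exists_lszAction_coercive (h : 0 < lam ∨ lam = 0 ∧ ∀ n m, 0 < E n + Et m) :
    ∃ c > 0, ∃ C, ∀ Φ, c * ∑ n, ∑ m, ‖Φ n m‖ ^ 2 ≤ (lszAction N E Et lam Φ).re + C := by
  obtain ⟨hlam, c, hc, C, hbound⟩ : 0 ≤ lam ∧ ∃ c > 0, ∃ C : Fin N → Fin N → ℝ,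
      ∀ n m x, c * x ^ 2 ≤ (E n + Et m) * x ^ 2 + lam / 2 * (x ^ 2) ^ 2 + C n m := by
    rcases h with hlam | ⟨rfl, hpos⟩
    · exact ⟨hlam.le, 1, one_pos, _, fun n m x => mul_le_quadratic_add hlam (E n + Et m) 1 (x ^ 2)⟩
    · obtain ⟨c, hc, hlt⟩ := Pi.exists_forall_pos_add_lt (x := 0)
        (y := fun i : Fin N × Fin N => E i.1 + Et i.2) fun i => hpos i.1 i.2
      refine ⟨le_rfl, c, hc, 0, fun n m x => ?_⟩
      simpa using mul_le_mul_of_nonneg_right (hlt (n, m)).le (sq_nonneg x)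
  refine ⟨c, hc, ∑ n, ∑ m, C n m, fun Φ => ?_⟩
  calc c * ∑ n, ∑ m, ‖Φ n m‖ ^ 2
      ≤ ∑ n, ∑ m, ((E n + Et m) * ‖Φ n m‖ ^ 2 + lam / 2 * (‖Φ n m‖ ^ 2) ^ 2 + C n m) := by
        simp only [Finset.mul_sum]
        gcongr with n _ m _
        exact hbound n m _
    _ = ∑ n, ∑ m, ((E n + Et m) * ‖Φ n m‖ ^ 2 + lam / 2 * (‖Φ n m‖ ^ 2) ^ 2) +
          ∑ n, ∑ m, C n m := by simp only [Finset.sum_add_distrib]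
    _ ≤ (lszAction N E Et lam Φ).re + ∑ n, ∑ m, C n m := by
        gcongr
        exact sum_le_lszAction_re E Et hlam Φ

variable (E Et lam)

/-- The unnormalized Boltzmann measure `exp (-N S(Φ)) dΦ` of the LSZ model, of which `Z(J,K)` is the
exponential generating function. The action is real, so taking its real part only changes its
type. -/
noncomputable def lszMeasure : Measure (Fin N → Fin N → ℂ) :=
  volume.withDensity fun Φ => ENNReal.ofReal (Real.exp (-N * (lszAction N E Et lam Φ).re))

lemma measurable_lszDensity : Measurable fun Φ : Fin N → Fin N → ℂ =>
    ENNReal.ofReal (Real.exp (-N * (lszAction N E Et lam Φ).re)) := by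
  have := (continuous_lszAction E Et lam).measurable
  fun_prop

lemma integral_lszMeasure (f : (Fin N → Fin N → ℂ) → ℂ) :
    ∫ Φ, f Φ ∂lszMeasure E Et lam =
      ∫ Φ, Complex.exp (-N * lszAction N E Et lam Φ) * f Φ := by
  rw [lszMeasure, integral_withDensity_eq_integral_toReal_smul (measurable_lszDensity E Et lam)
    (by simp)]
  congr with Φ
  rw [ENNReal.toReal_ofReal (Real.exp_nonneg _), Complex.real_smul, ← lszAction_ofReal_re]
  push_cast
  rfl

lemma integrable_lszMeasure_iff (f : (Fin N → Fin N → ℂ) → ℝ) :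
    Integrable f (lszMeasure E Et lam) ↔
      Integrable fun Φ => Real.exp (-N * (lszAction N E Et lam Φ).re) * f Φ := by
  rw [lszMeasure, integrable_withDensity_iff_integrable_smul' (measurable_lszDensity E Et lam)
    (by simp)]
  simp only [ENNReal.toReal_ofReal (Real.exp_nonneg _), smul_eq_mul]

lemma lszZ_eq_integral_lszMeasure (J K : Fin N → Fin N → ℂ) :
    lszZ N E Et lam J K = ∫ Φ, Complex.exp (N * ((∑ m, ∑ n, J n m * (starRingEnd ℂ) (Φ n m)) +
      ∑ m, ∑ n, K m n * Φ n m)) ∂lszMeasure E Et lam := by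
  simp only [integral_lszMeasure, lszZ, lszIntegrand, Complex.exp_add]

lemma lszZ_update_zero_zero (p : Fin N) (s : ℝ) :
    lszZ N (Function.update E p s) Et lam 0 0 =
      ∫ Φ, Complex.exp ((s - E p : ℝ) * (-N * ∑ m, (‖Φ p m‖ : ℂ) ^ 2)) ∂lszMeasure E Et lam := by
  simp only [integral_lszMeasure, lszZ, lszIntegrand, lszAction_update, ← Complex.exp_add]
  congr with Φ
  congr 1
  simp only [Complex.ofReal_sub, Pi.zero_apply, zero_mul, Finset.sum_const_zero, add_zero,
    mul_zero]
  ring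

lemma lszZ_smul_eMat (p n : Fin N) (t s : ℂ) :
    lszZ N E Et lam (t • eMat N p n) (s • eMat N n p) =
      ∫ Φ, Complex.exp (t * (N * (starRingEnd ℂ) (Φ p n)) + s * (N * Φ p n))
        ∂lszMeasure E Et lam := by
  have hsum (a b : Fin N) (z : ℂ) (f : Fin N → Fin N → ℂ) :
      ∑ m, ∑ k, (z • eMat N a b) m k * f m k = z * f a b := by
    rw [Finset.sum_eq_single a, Finset.sum_eq_single b] <;> simp +contextual [eMat]
  rw [lszZ_eq_integral_lszMeasure]
  congr with Φ
  rw [Finset.sum_comm, hsum p n t fun i j => (starRingEnd ℂ) (Φ i j), hsum n p s fun i j => Φ j i]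
  congr 1
  ring

lemma integral_apply_lszMeasure_eq_zero (p n : Fin N) : ∫ Φ, Φ p n ∂lszMeasure E Et lam = 0 := by
  have : (volume : Measure (Fin N → Fin N → ℂ)).IsNegInvariant := Measure.pi.isNegInvariant _
  rw [integral_lszMeasure]
  refine integral_eq_zero_of_odd _ fun Φ => ?_
  rw [lszAction_even, Pi.neg_apply, Pi.neg_apply, mul_neg]

instance : NeZero (lszMeasure E Et lam) := by
  have : (volume : Measure (Fin N → Fin N → ℂ)).IsOpenPosMeasure := Measure.pi.isOpenPosMeasure _
  refine ⟨fun h => NeZero.ne (volume : Measure (Fin N → Fin N → ℂ)) ?_⟩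
  have hac := withDensity_absolutelyContinuous' (μ := volume)
    (measurable_lszDensity E Et lam).aemeasurable (.of_forall fun Φ => by simp [Real.exp_pos])
  exact Measure.absolutelyContinuous_zero_iff.mp (h ▸ hac)

variable {E Et lam}

section Confining

variable (h : 0 < lam ∨ lam = 0 ∧ ∀ n m, 0 < E n + Et m)
include h

lemma exists_integrable_exp_mul_sum_sq_norm [NeZero N] :
    ∃ ε > 0, Integrable (fun Φ => Real.exp (ε * (N * ∑ n, ∑ m, ‖Φ n m‖ ^ 2)))
      (lszMeasure E Et lam) := by
  obtain ⟨c, hc, C, hcoer⟩ := exists_lszAction_coercive h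
  have hN : (0 : ℝ) < N := by exact_mod_cast Nat.pos_of_neZero N
  have hgauss := (integrable_exp_neg_mul_sum_sq_norm (ι := Fin N) (κ := Fin N)
    (b := N * (c / 2)) (by positivity)).const_mul (Real.exp (N * C))
  refine ⟨c / 2, half_pos hc, (integrable_lszMeasure_iff E Et lam _).2
    (hgauss.mono' ?_ (.of_forall fun Φ => ?_))⟩
  · have := continuous_lszAction E Et lam
    exact Continuous.aestronglyMeasurable (by fun_prop)
  · rw [Real.norm_of_nonneg (by positivity), ← Real.exp_add, ← Real.exp_add, Real.exp_le_exp]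
    linarith [mul_le_mul_of_nonneg_left (hcoer Φ) hN.le]

lemma exists_integrable_exp_mul_row (p : Fin N) :
    ∃ ε > 0, Integrable (fun Φ => Real.exp (ε * (N * ∑ m, ‖Φ p m‖ ^ 2))) (lszMeasure E Et lam) := by
  have := p.neZero
  obtain ⟨ε, hε, hint⟩ := exists_integrable_exp_mul_sum_sq_norm h
  refine ⟨ε, hε, hint.mono' (Continuous.aestronglyMeasurable (by fun_prop))
    (.of_forall fun Φ => ?_)⟩
  have hrow : ∑ m, ‖Φ p m‖ ^ 2 ≤ ∑ n, ∑ m, ‖Φ n m‖ ^ 2 :=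
    Finset.single_le_sum (f := fun n => ∑ m, ‖Φ n m‖ ^ 2) (fun n _ => by positivity)
      (Finset.mem_univ p)
  rw [Real.norm_of_nonneg (by positivity), Real.exp_le_exp]
  exact mul_le_mul_of_nonneg_left (mul_le_mul_of_nonneg_left hrow N.cast_nonneg) hε.le

lemma integrable_exp_mul_norm_apply (p n : Fin N) (c : ℝ) :
    Integrable (fun Φ => Real.exp (c * ‖Φ p n‖)) (lszMeasure E Et lam) := by
  obtain ⟨ε, hε, hint⟩ := exists_integrable_exp_mul_row h p
  have hN : (0 : ℝ) < N := by exact_mod_cast p.pos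
  refine integrable_exp_mul_of_integrable_exp_mul_sq (ε := ε * N)
    (Continuous.aestronglyMeasurable (by fun_prop)) (by positivity) ?_ c
  refine hint.mono' (Continuous.aestronglyMeasurable (by fun_prop)) (.of_forall fun Φ => ?_)
  rw [Real.norm_of_nonneg (by positivity), mul_assoc]
  gcongr
  exact Finset.single_le_sum (f := fun m => ‖Φ p m‖ ^ 2) (fun m _ => by positivity)
    (Finset.mem_univ n)

lemma isFiniteMeasure_lszMeasure [NeZero N] : IsFiniteMeasure (lszMeasure E Et lam) := by
  have hone : Integrable (fun _ => (1 : ℝ)) (lszMeasure E Et lam) := by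
    simpa using integrable_exp_mul_norm_apply h 0 0 0
  exact (integrable_const_iff_isFiniteMeasure one_ne_zero).mp hone

lemma integrable_sq_norm_apply (p n : Fin N) :
    Integrable (fun Φ => (‖Φ p n‖ : ℂ) ^ 2) (lszMeasure E Et lam) := by
  have hreal : Integrable (fun Φ => ‖Φ p n‖ ^ 2) (lszMeasure E Et lam) :=
    ProbabilityTheory.integrable_pow_of_integrable_exp_mul one_ne_zero
      (integrable_exp_mul_norm_apply h p n 1) (integrable_exp_mul_norm_apply h p n (-1)) 2
  exact_mod_cast hreal.ofReal (𝕜 := ℂ)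

lemma hasDerivAt_log_lszZ_update (p : Fin N) :
    HasDerivAt (fun s : ℝ => Complex.log (lszZ N (Function.update E p s) Et lam 0 0))
      (⨍ Φ, -N * ∑ m, (‖Φ p m‖ : ℂ) ^ 2 ∂lszMeasure E Et lam) (E p) := by
  have := p.neZero
  have := isFiniteMeasure_lszMeasure h
  obtain ⟨ε, hε, hint⟩ := exists_integrable_exp_mul_row h p
  have hnorm (Φ : Fin N → Fin N → ℂ) :
      ‖-(N : ℂ) * ∑ m, (‖Φ p m‖ : ℂ) ^ 2‖ = N * ∑ m, ‖Φ p m‖ ^ 2 := by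
    have : ∑ m, (‖Φ p m‖ : ℂ) ^ 2 = (∑ m, ‖Φ p m‖ ^ 2 : ℝ) := by push_cast; rfl
    rw [norm_mul, norm_neg, Complex.norm_natCast, this, Complex.norm_of_nonneg (by positivity)]
  have hderiv := hasDerivAt_log_integral_cexp (μ := lszMeasure E Et lam)
    (X := fun Φ => -N * ∑ m, (‖Φ p m‖ : ℂ) ^ 2)
    (Continuous.aestronglyMeasurable (by fun_prop)) hε (by simpa only [hnorm] using hint)
  have hzero : (0 : ℂ) = ((E p - E p : ℝ) : ℂ) := by simp
  rw [hzero] at hderiv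
  simpa only [lszZ_update_zero_zero] using hderiv.comp_ofReal.comp_sub_const (E p) (E p)

lemma dJ_dK_log_lszZ (p n : Fin N) :
    dJ N p n (dK N n p fun J K => Complex.log (lszZ N E Et lam J K)) 0 0 =
      ⨍ Φ, (N : ℂ) ^ 2 * (‖Φ p n‖ : ℂ) ^ 2 ∂lszMeasure E Et lam := by
  have := p.neZero
  have := isFiniteMeasure_lszMeasure h
  have hint : Integrable (fun Φ => Real.exp (1 * (‖(N : ℂ) * (starRingEnd ℂ) (Φ p n)‖ +
      ‖(N : ℂ) * Φ p n‖))) (lszMeasure E Et lam) := by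
    convert integrable_exp_mul_norm_apply h p n (2 * N) using 3 with Φ
    simp only [norm_mul, RCLike.norm_conj, Complex.norm_natCast]
    ring
  have hmean : ⨍ Φ, (N : ℂ) * Φ p n ∂lszMeasure E Et lam = 0 := by
    rw [average_eq, integral_const_mul, integral_apply_lszMeasure_eq_zero, mul_zero, smul_zero]
  simp only [dJ, dK, zero_add, lszZ_smul_eMat]
  rw [deriv_deriv_log_integral_cexp_add (Continuous.aestronglyMeasurable (by fun_prop))
    (Continuous.aestronglyMeasurable (by fun_prop)) one_pos hint, hmean, mul_zero, sub_zero]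
  congr with Φ
  rw [← Complex.conj_mul']
  ring

lemma sum_dJ_dK_log_lszZ (p : Fin N) :
    ∑ n, dJ N p n (dK N n p fun J K => Complex.log (lszZ N E Et lam J K)) 0 0 =
      -(N * deriv (fun s : ℝ => Complex.log (lszZ N (Function.update E p s) Et lam 0 0))
        (E p)) := by
  have := p.neZero
  have := isFiniteMeasure_lszMeasure h
  simp only [dJ_dK_log_lszZ h, (hasDerivAt_log_lszZ_update h p).deriv, average]
  rw [← integral_finsetSum _ fun n _ => ((integrable_sq_norm_apply h p n).const_mul _).to_average,
    ← integral_const_mul, ← integral_neg]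
  congr with Φ
  rw [← Finset.mul_sum]
  ring

end Confining

end BoltzmannMeasure

theorem lsz_omega_boundary_creation_general
    (N : ℕ) (E Et : Fin N → ℝ) (lam : ℝ)
    (h : 0 < lam ∨ lam = 0 ∧ ∀ n m, 0 < E n + Et m)
    (p : Fin N) :
    (-(deriv (fun s : ℝ => Complex.log (lszZ N (Function.update E p s) Et lam 0 0)) (E p))
      = (1 / (N : ℂ)) *
        ∑ n, dJ N p n (dK N n p (fun J K => Complex.log (lszZ N E Et lam J K))) 0 0) ∧
    ((1 / (N : ℂ) ^ 2) *
        ∑ n, dJ N p n (dK N n p (fun J K => Complex.log (lszZ N E Et lam J K))) 0 0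
      = -((1 / (N : ℂ)) *
        deriv (fun s : ℝ => Complex.log (lszZ N (Function.update E p s) Et lam 0 0)) (E p))) := by
  have hN : (N : ℂ) ≠ 0 := by exact_mod_cast p.pos.ne'
  rw [sum_dJ_dK_log_lszZ h]
  constructor <;> field_simp

/-- The correlator `Ω_p` is created from the free energy by the boundary
creation operator: `−∂/∂E_p[log Z(0,0)] = (1/N)·Σ_n ∂²(log Z)/∂J_{pn}∂K_{np}(0,0)`, i.e.
`Ω_p := (1/N²)·Σ_n ∂²(log Z)/∂J_{pn}∂K_{np}(0,0) = −(1/N)·∂ log Z(0,0)/∂E_p`. -/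
theorem lsz_omega_boundary_creation
    (N : ℕ) (hN : 1 ≤ N) (E Et : Fin N → ℝ)
    (hE : ∀ n, 0 < E n) (hEt : ∀ n, 0 < Et n) (lam : ℝ) (hlam : 0 ≤ lam)
    (p : Fin N) :
    (-(deriv (fun s : ℝ => Complex.log (lszZ N (Function.update E p s) Et lam 0 0)) (E p))
      = (1 / (N : ℂ)) *
        ∑ n, dJ N p n (dK N n p (fun J K => Complex.log (lszZ N E Et lam J K))) 0 0) ∧
    ((1 / (N : ℂ) ^ 2) *
        ∑ n, dJ N p n (dK N n p (fun J K => Complex.log (lszZ N E Et lam J K))) 0 0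
      = -((1 / (N : ℂ)) *
        deriv (fun s : ℝ => Complex.log (lszZ N (Function.update E p s) Et lam 0 0)) (E p))) :=
  lsz_omega_boundary_creation_general N E Et lam
    (hlam.lt_or_eq.imp_right fun h => ⟨h.symm, fun n m => add_pos (hE n) (hEt m)⟩) p
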